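/- Let 𝔞 = ⟨f̃₁, …, f̃_k⟩ be an ideal of height k in the polynomial ring R = Q̄[X₁, …, X_n], and f₁, …, f_m ∈ R with ht(⟨f₁, …, f_m⟩) > k. Then for any l = |Ass(𝔞)|·(m − 1) + 1, the set {Σᵢ jⁱ fᵢ : j = 1, …, l} is not contained in the union of the associated primes of 𝔞; in particular some Vandermonde combination Σᵢ jⁱ fᵢ is a non-zero-divisor modulo 𝔞. -/

import Mathlib

open Finset

/-- The height of an ideal: the infimum of the heights of the primes containing it. -/
noncomputable def idealHeight {R : Type*} [CommRing R] (I : Ideal R) : ℕ∞ :=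
  ⨅ (p : PrimeSpectrum R) (_ : I ≤ p.asIdeal), Order.height p

/-
By Rees' theorem, a weakly regular sequence contained in a prime `P` forces the vanishing of
`Ext^i(R/P, R)` for small `i`, and dividing out a weakly regular sequence `rs` shifts these
groups down by one at each step; comparing with an embedding `R/P → R/(rs)` shows that no weakly
regular sequence in an associated prime of `R/(rs)` is longer than `rs`. In a Cohen–Macaulay ring
an associated prime of `R/(rs)` therefore has height at most the length of `rs`.

If `k` elements generate an ideal of height at least `k`, adding to each generator a combination
of the later ones (prime avoidance in a coset) turns them into a weakly regular sequence. So the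
associated primes of `𝔞` have height at most `k`, and none of them contains all the `fᵢ`. Modulo
one associated prime, the Vandermonde determinant allows at most `m - 1` of the combinations
`∑ᵢ jⁱ fᵢ` to vanish, and counting over all associated primes leaves one `j` over.

Polynomial rings inherit the Cohen–Macaulay property: if a prime `P` of `R[X]` is not extended
from `q = P ∩ R`, a regular sequence of length `ht q` in `q` is continued by an element of `P`,
because by McCoy's theorem the zero divisors modulo `(rs)R[X]` lie in the extensions of the
associated primes of `R/(rs)`, none of which contains `P`.
-/

section Ext

open CategoryTheory Abelian RingTheory.Sequence

universe u

variable {R : Type u} [CommRing R]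

theorem subsingleton_ext_quotSMulTop {N M : ModuleCat.{u} R} {x : R} (hx : IsSMulRegular M x)
    {n : ℕ} (hext : ∀ i < n + 1, Subsingleton (Ext N M i)) :
    ∀ i < n, Subsingleton (Ext N (ModuleCat.of R (QuotSMulTop x M)) i) := by
  intro i hi
  have zero_left := AddCommGrpCat.isZero_of_iff_subsingleton.mpr (hext i (by lia))
  have zero_right := AddCommGrpCat.isZero_of_iff_subsingleton.mpr (hext (i + 1) (by lia))
  exact AddCommGrpCat.subsingleton_of_isZero <| ShortComplex.Exact.isZero_of_both_zeros
    (Ext.covariant_sequence_exact₃' N hx.smulShortComplex_shortExact i (i + 1) rfl)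
    (zero_left.eq_zero_of_src _) (zero_right.eq_zero_of_tgt _)

theorem subsingleton_linearMap_quotient_ofList {N : Type u} [AddCommGroup N] [Module R N]
    {M : Type u} [AddCommGroup M] [Module R M] {rs : List R} (hrs : IsWeaklyRegular M rs)
    (hext : ∀ i ≤ rs.length, Subsingleton (Ext (ModuleCat.of R N) (ModuleCat.of R M) i)) :
    Subsingleton (N →ₗ[R] M ⧸ Ideal.ofList rs • (⊤ : Submodule R M)) := by
  induction rs generalizing M with
  | nil =>
    have : Subsingleton (N →ₗ[R] M) :=
      (Ext.addEquiv₀.trans ModuleCat.homAddEquiv).symm.subsingleton_congr.mpr (hext 0 le_rfl)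
    have e : (M ⧸ Ideal.ofList ([] : List R) • (⊤ : Submodule R M)) ≃ₗ[R] M :=
      Submodule.quotEquivOfEqBot _ (by simp)
    exact e.congrRight.toEquiv.subsingleton
  | cons r rs ih =>
    rw [isWeaklyRegular_cons_iff] at hrs
    have := ih hrs.2 fun i hi ↦ subsingleton_ext_quotSMulTop hrs.1
      (fun j hj ↦ hext j (Nat.lt_succ_iff.mp hj)) i (by rw [List.length_cons]; lia)
    let e := Submodule.quotOfListConsSMulTopEquivQuotSMulTopInner M r rs
    exact e.congrRight.toEquiv.subsingleton

theorem smul_top_lt_top_of_mem_support {M : Type*} [AddCommGroup M] [Module R M]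
    [Module.Finite R M] {P : PrimeSpectrum R} (hP : P ∈ Module.support R M) :
    P.asIdeal • (⊤ : Submodule R M) < ⊤ := by
  refine lt_top_iff_ne_top.mpr fun htop ↦ ?_
  obtain ⟨r, hr, hr0⟩ := Submodule.exists_sub_one_mem_and_smul_eq_zero_of_fg_of_le_smul
    P.asIdeal ⊤ Module.Finite.fg_top htop.ge
  have hrP : r ∈ P.asIdeal :=
    Module.mem_support_iff_of_finite.mp hP (Module.mem_annihilator.mpr fun x ↦ hr0 x trivial)
  exact P.isPrime.one_notMem (by simpa using sub_mem hrP hr)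

theorem length_le_of_mem_associatedPrimes [IsNoetherianRing R]
    {M : Type u} [AddCommGroup M] [Module R M] [Module.Finite R M]
    {rs ss : List R} (hrs : IsWeaklyRegular M rs) (hss : IsWeaklyRegular M ss) {P : Ideal R}
    (hP : P ∈ associatedPrimes R (M ⧸ Ideal.ofList rs • (⊤ : Submodule R M)))
    (hmem : ∀ s ∈ ss, s ∈ P) : ss.length ≤ rs.length := by
  by_contra! hlt
  obtain ⟨_, φ, hφ⟩ := (isAssociatedPrime_iff_exists_injective_linearMap _ _).mp hP
  have hsupp : ⟨P, hP.1⟩ ∈ Module.support R M :=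
    Module.mem_support_iff_of_finite.mpr <|
      (LinearMap.annihilator_le_of_surjective (Submodule.mkQ _) (Submodule.mkQ_surjective _)).trans
        (Submodule.annihilator_top.ge.trans (IsAssociatedPrime.annihilator_le hP))
  have hlt_top := smul_top_lt_top_of_mem_support hsupp
  have hreg : IsRegular M ss := ⟨hss, fun h ↦ hlt_top.ne <| top_le_iff.mp <|
    h.le.trans <| Submodule.smul_mono_left <| Ideal.span_le.mpr hmem⟩
  have : Subsingleton ((R ⧸ P) →ₗ[R] M ⧸ Ideal.ofList rs • (⊤ : Submodule R M)) := by
    refine subsingleton_linearMap_quotient_ofList hrs fun i hi ↦ ?_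
    refine ModuleCat.subsingleton_ext_of_exists_isRegular P (ModuleCat.of R (R ⧸ P)) ?_
      (ModuleCat.of R M) hlt_top ss hmem hreg i (by lia)
    simp [Module.support_eq_zeroLocus, Ideal.annihilator_quotient]
  have : Nontrivial (R ⧸ P) := Ideal.Quotient.nontrivial_iff.mpr hP.1.ne_top
  exact one_ne_zero (hφ (a₁ := 1) (a₂ := 0) (by simp [Subsingleton.elim φ 0]))

end Ext

section CommRing

open RingTheory.Sequence

variable {R : Type*} [CommRing R]

theorem exists_add_notMem_of_forall_not_le {S : Finset (Ideal R)} (hS : ∀ P ∈ S, P.IsPrime)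
    {x : R} {I : Ideal R} (h : ∀ P ∈ S, x ∈ P → ¬ I ≤ P) :
    ∃ i ∈ I, ∀ P ∈ S, x + i ∉ P := by
  classical
  induction S using Finset.strongInduction with
  | H S ih =>
  obtain rfl | hne := S.eq_empty_or_nonempty
  · exact ⟨0, I.zero_mem, by simp⟩
  obtain ⟨P, hP, hmin⟩ := S.exists_minimal hne
  have hPprime := hS P hP
  obtain ⟨i, hi, havoid⟩ := ih (S.erase P) (S.erase_ssubset hP)
    (fun Q hQ ↦ hS Q (Finset.mem_of_mem_erase hQ)) fun Q hQ ↦ h Q (Finset.mem_of_mem_erase hQ)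
  by_cases hxi : x + i ∈ P
  swap
  · exact ⟨i, hi, fun Q hQ ↦ (eq_or_ne Q P).elim (fun hQP ↦ hQP ▸ hxi)
      fun hQP ↦ havoid Q (Finset.mem_erase.mpr ⟨hQP, hQ⟩)⟩
  have hIP : ¬ I ≤ P := fun hle ↦ h P hP (by simpa using P.sub_mem hxi (hle hi)) hle
  have hprod : ¬ I * ∏ Q ∈ S.erase P, Q ≤ P := by
    rw [hPprime.mul_le, hPprime.prod_le, not_or]
    refine ⟨hIP, fun ⟨Q, hQ, hQP⟩ ↦ ?_⟩
    exact Finset.ne_of_mem_erase hQ (hQP.antisymm (hmin (Finset.mem_of_mem_erase hQ) hQP))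
  obtain ⟨y, hy, hyP⟩ := SetLike.not_le_iff_exists.mp hprod
  refine ⟨i + y, I.add_mem hi (Ideal.mul_le_left hy), fun Q hQ hmem ↦ ?_⟩
  rw [← add_assoc] at hmem
  obtain rfl | hQP := eq_or_ne Q P
  · exact hyP ((Q.add_mem_iff_right hxi).mp hmem)
  · have hQ' := Finset.mem_erase.mpr ⟨hQP, hQ⟩
    have hyQ : y ∈ Q :=
      (Ideal.mul_le_right.trans (Ideal.prod_le_inf.trans (Finset.inf_le hQ'))) hy
    exact havoid Q hQ' ((Q.add_mem_iff_left hyQ).mp hmem)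

theorem ofList_add_cons_of_mem {cs : List R} {c i : R} (hi : i ∈ Ideal.ofList cs) :
    Ideal.ofList ((c + i) :: cs) = Ideal.ofList (c :: cs) := by
  rw [Ideal.ofList_cons, Ideal.ofList_cons]
  refine le_antisymm (sup_le ?_ le_sup_right) (sup_le ?_ le_sup_right) <;>
    rw [Ideal.span_singleton_le_iff_mem]
  · exact add_mem (Ideal.mem_sup_left (Ideal.mem_span_singleton_self c)) (Ideal.mem_sup_right hi)
  · simpa using sub_mem (Ideal.mem_sup_left (Ideal.mem_span_singleton_self (c + i)))
      (Ideal.mem_sup_right hi)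

theorem ofList_ofFn {k : ℕ} (g : Fin k → R) :
    Ideal.ofList (List.ofFn g) = Ideal.span (Set.range g) := by
  simp [Ideal.ofList, List.mem_ofFn', Set.range]

theorem isSMulRegular_iff_forall_notMem_associatedPrimes [IsNoetherianRing R] {M : Type*}
    [AddCommGroup M] [Module R M] {x : R} :
    IsSMulRegular M x ↔ ∀ P ∈ associatedPrimes R M, x ∉ P := by
  simpa using (Set.ext_iff.mp (biUnion_associatedPrimes_eq_compl_regular R M) x).not.symm

theorem le_of_mem_associatedPrimes_quotient {I P : Ideal R}
    (hP : P ∈ associatedPrimes R (R ⧸ I)) : I ≤ P := by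
  simpa [Submodule.annihilator_top, Ideal.annihilator_quotient] using
    IsAssociatedPrime.annihilator_le hP

theorem isWeaklyRegular_concat_iff [IsNoetherianRing R] {rs : List R}
    {x : R} : IsWeaklyRegular R (rs ++ [x]) ↔
      IsWeaklyRegular R rs ∧ ∀ P ∈ associatedPrimes R (R ⧸ Ideal.ofList rs), x ∉ P := by
  rw [isWeaklyRegular_append_iff, isWeaklyRegular_singleton_iff,
    isSMulRegular_iff_forall_notMem_associatedPrimes, smul_eq_mul, Ideal.mul_top]

end CommRing

section CohenMacaulay

open RingTheory.Sequence

/-- A Noetherian ring is Cohen–Macaulay if every prime has grade equal to its height. Since the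
grade never exceeds the height, it suffices to ask for a regular sequence in the prime which is at
least as long as the height; being contained in a proper ideal, such a sequence only needs to be
weakly regular. -/
class IsCohenMacaulayRing (R : Type*) [CommRing R] : Prop extends IsNoetherianRing R where
  exists_isWeaklyRegular (P : Ideal R) [P.IsPrime] :
    ∃ rs : List R, IsWeaklyRegular R rs ∧ (∀ r ∈ rs, r ∈ P) ∧ P.height ≤ rs.length

variable {R : Type*} [CommRing R] [IsCohenMacaulayRing R]

theorem exists_isWeaklyRegular_length_eq_height (P : Ideal R) [P.IsPrime] :
    ∃ rs : List R, IsWeaklyRegular R rs ∧ (∀ r ∈ rs, r ∈ P) ∧ rs.length = P.height := by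
  obtain ⟨rs, hrs, hmem, hheight⟩ := IsCohenMacaulayRing.exists_isWeaklyRegular P
  obtain ⟨n, hn⟩ := ENat.ne_top_iff_exists.mp (Ideal.height_lt_top (I := P) ‹P.IsPrime›.ne_top).ne
  rw [← hn] at hheight ⊢
  rw [← List.take_append_drop n rs, isWeaklyRegular_append_iff] at hrs
  refine ⟨rs.take n, hrs.1, fun r hr ↦ hmem r (List.mem_of_mem_take hr), ?_⟩
  rw [List.length_take_of_le (Nat.cast_le.mp hheight)]

theorem height_le_length_of_isWeaklyRegular {rs : List R} (hrs : IsWeaklyRegular R rs)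
    {P : Ideal R} (hP : P ∈ associatedPrimes R (R ⧸ Ideal.ofList rs)) :
    P.height ≤ rs.length := by
  have := hP.1
  obtain ⟨ss, hss, hmem, hheight⟩ := IsCohenMacaulayRing.exists_isWeaklyRegular P
  refine hheight.trans (Nat.cast_le.mpr (length_le_of_mem_associatedPrimes hrs hss ?_ hmem))
  rwa [smul_eq_mul, Ideal.mul_top]

theorem exists_isWeaklyRegular_ofList_eq {rs cs : List R} (hrs : IsWeaklyRegular R rs)
    (h : (rs ++ cs).length ≤ (Ideal.ofList (rs ++ cs)).height) :
    ∃ ss : List R, IsWeaklyRegular R ss ∧ ss.length = (rs ++ cs).length ∧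
      Ideal.ofList ss = Ideal.ofList (rs ++ cs) := by
  induction cs generalizing rs with
  | nil => exact ⟨rs, hrs, by simp⟩
  | cons c cs ih =>
    have hfin := associatedPrimes.finite R (R ⧸ Ideal.ofList rs)
    obtain ⟨i, hi, havoid⟩ : ∃ i ∈ Ideal.ofList cs,
        ∀ P ∈ hfin.toFinset, c + i ∉ P := by
      refine exists_add_notMem_of_forall_not_le (by simpa using fun P hP ↦ hP.1) ?_
      intro P hP hc hcs
      rw [Set.Finite.mem_toFinset] at hP
      have hle : Ideal.ofList (rs ++ c :: cs) ≤ P := by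
        simpa [Ideal.span_singleton_le_iff_mem, hc, hcs] using
          le_of_mem_associatedPrimes_quotient hP
      have hlen := (h.trans (Ideal.height_mono hle)).trans
        (height_le_length_of_isWeaklyRegular hrs hP)
      rw [Nat.cast_le, List.length_append, List.length_cons] at hlen
      lia
    have hrs' : IsWeaklyRegular R (rs ++ [c + i]) :=
      isWeaklyRegular_concat_iff.mpr ⟨hrs, by simpa using havoid⟩
    have hspan : Ideal.ofList (rs ++ [c + i] ++ cs) = Ideal.ofList (rs ++ c :: cs) := by
      simp only [List.append_assoc, List.singleton_append, Ideal.ofList_append,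
        ofList_add_cons_of_mem hi]
    have hlen : (rs ++ [c + i] ++ cs).length = (rs ++ c :: cs).length := by simp
    rw [← hspan, ← hlen] at h ⊢
    exact ih hrs' h

theorem height_le_length_of_le_height {rs : List R} (h : rs.length ≤ (Ideal.ofList rs).height)
    {P : Ideal R} (hP : P ∈ associatedPrimes R (R ⧸ Ideal.ofList rs)) :
    P.height ≤ rs.length := by
  obtain ⟨ss, hss, hlen, hspan⟩ := exists_isWeaklyRegular_ofList_eq (rs := []) (cs := rs)
    (IsWeaklyRegular.nil R R) h
  rw [List.nil_append] at hlen hspan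
  rw [← hspan] at hP
  rw [← hlen]
  exact height_le_length_of_isWeaklyRegular hss hP

theorem height_le_of_mem_associatedPrimes_span {k : ℕ} {g : Fin k → R}
    (hg : k ≤ (Ideal.span (Set.range g)).height) {P : Ideal R}
    (hP : P ∈ associatedPrimes R (R ⧸ Ideal.span (Set.range g))) : P.height ≤ k := by
  rw [← ofList_ofFn] at hg hP
  simpa using height_le_length_of_le_height (by simpa using hg) hP

end CohenMacaulay

section Polynomial

open Polynomial RingTheory.Sequence

variable {R : Type*} [CommRing R]

attribute [local instance] Polynomial.algebra Polynomial.isLocalization in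
theorem height_le_one_of_comap_C_eq_bot [IsDomain R] {P : Ideal R[X]}
    [P.IsPrime] (hP : P.comap C = ⊥) : P.height ≤ 1 := by
  have disj : Disjoint ((nonZeroDivisors R).map C : Set R[X]) P := by
    refine Set.disjoint_left.mpr fun _ ⟨r, hr, hrP⟩ hmem ↦ nonZeroDivisors.ne_zero hr ?_
    rw [← Ideal.mem_bot, ← hP, Ideal.mem_comap]
    exact hrP ▸ hmem
  have hprime := IsLocalization.isPrime_of_isPrime_disjoint _ (FractionRing R)[X] P ‹_› disj
  rw [← IsLocalization.height_map_of_disjoint (S := (FractionRing R)[X]) _ P disj]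
  exact WithBot.coe_le_coe.mp <| (Ideal.height_le_ringKrullDim_of_ne_top hprime.ne_top).trans
    (Ring.krullDimLE_iff.mp inferInstance)

theorem height_le_height_comap_C_add_one [IsNoetherianRing R]
    (P : Ideal R[X]) [P.IsPrime] : P.height ≤ (P.comap C).height + 1 := by
  let e := (P.comap C).polynomialQuotientEquivQuotientPolynomial
  let fibre := P.map (Ideal.Quotient.mk ((P.comap C).map C))
  have hmap_le : (P.comap C).map C ≤ P := Ideal.map_comap_le
  have hcomap : fibre.comap (Ideal.Quotient.mk _) = P := by
    rwa [Ideal.comap_map_of_surjective' _ Ideal.Quotient.mk_surjective, Ideal.mk_ker, sup_eq_left]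
  have : fibre.IsPrime :=
    Ideal.map_isPrime_of_surjective Ideal.Quotient.mk_surjective (by rwa [Ideal.mk_ker])
  have hfibre : fibre.height ≤ 1 := by
    rw [← RingEquiv.height_comap e]
    refine height_le_one_of_comap_C_eq_bot (eq_bot_iff.mpr fun r hr ↦ ?_)
    obtain ⟨r, rfl⟩ := Ideal.Quotient.mk_surjective r
    rw [Ideal.mem_comap, Ideal.mem_comap, ← map_C,
      Ideal.polynomialQuotientEquivQuotientPolynomial_map_mk, ← Ideal.mem_comap, hcomap] at hr
    exact Ideal.Quotient.eq_zero_iff_mem.mpr hr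
  have : P.LiesOver (P.comap C) := ⟨rfl⟩
  exact (Ideal.height_le_height_add_of_liesOver (P.comap C) P).trans (by gcongr; exact hfibre)

theorem comap_C_map_C (I : Ideal R) :
    (I.map C : Ideal R[X]).comap C = I := by
  refine le_antisymm (fun r hr ↦ ?_) Ideal.le_comap_map
  simpa using Ideal.mem_map_C_iff.mp hr 0

theorem height_map_C_le [IsNoetherianRing R] (p : Ideal R) [p.IsPrime] :
    (p.map C : Ideal R[X]).height ≤ p.height := by
  have : (p.map C : Ideal R[X]).LiesOver p := ⟨(comap_C_map_C p).symm⟩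
  simpa using Ideal.height_le_height_add_of_liesOver p (p.map C : Ideal R[X])

theorem map_quotientMk_eq_zero_iff {I : Ideal R} {f : R[X]} :
    f.map (Ideal.Quotient.mk I) = 0 ↔ f ∈ I.map C := by
  simp [Polynomial.ext_iff, Ideal.mem_map_C_iff, Ideal.Quotient.eq_zero_iff_mem]

theorem exists_mem_map_C_of_not_isSMulRegular [IsNoetherianRing R]
    {I : Ideal R} {f : R[X]} (hf : ¬ IsSMulRegular (R[X] ⧸ I.map C) f) :
    ∃ p ∈ associatedPrimes R (R ⧸ I), f ∈ p.map C := by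
  have hmap : f.map (Ideal.Quotient.mk I) ∉ nonZeroDivisors (R ⧸ I)[X] := fun hreg ↦ hf <|
    (isSMulRegular_quotient_iff_mem_of_smul_mem _ f).mpr fun g hfg ↦ by
      rw [← map_quotientMk_eq_zero_iff, smul_eq_mul, Polynomial.map_mul] at hfg
      exact map_quotientMk_eq_zero_iff.mp ((mem_nonZeroDivisors_iff.mp hreg).1 _ hfg)
  obtain ⟨a, ha, haf⟩ := Polynomial.notMem_nonZeroDivisors_iff.mp hmap
  obtain ⟨p, hp, hap⟩ := exists_le_isAssociatedPrime_of_isNoetherianRing R a ha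
  refine ⟨p, hp, Ideal.mem_map_C_iff.mpr fun n ↦ hap ?_⟩
  have hcoeff : a * Ideal.Quotient.mk I (f.coeff n) = 0 := by
    simpa using congrArg (coeff · n) haf
  rw [Submodule.mem_colon_singleton, Submodule.mem_bot, Algebra.smul_def, mul_comm]
  exact hcoeff

variable [IsCohenMacaulayRing R]

theorem exists_mem_isSMulRegular_of_not_le_map_C {P : Ideal R[X]} [P.IsPrime]
    (hP : ¬ P ≤ (P.comap C).map C) {rs : List R} (hrs : IsWeaklyRegular R rs)
    (hlen : rs.length ≤ (P.comap C).height) :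
    ∃ f ∈ P, IsSMulRegular (R[X] ⧸ (Ideal.ofList rs).map C) f := by
  by_contra! hzd
  have hcover : (P : Set R[X]) ⊆
      ⋃ p ∈ associatedPrimes R (R ⧸ Ideal.ofList rs), (p.map C : Ideal R[X]) := fun f hf ↦
    Set.mem_iUnion₂.mpr <| by
      simpa using exists_mem_map_C_of_not_isSMulRegular (hzd f hf)
  obtain ⟨p, hp, hPp⟩ := (Ideal.subset_union_prime_finite
    (associatedPrimes.finite R _) ⊤ ⊤ (f := Ideal.map C) fun p hp _ _ ↦
      have := hp.1; inferInstance).mp hcover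
  have hle : P.comap C ≤ p := (Ideal.comap_mono hPp).trans (comap_C_map_C p).le
  have heq : P.comap C = p := Ideal.eq_of_le_of_height_le _ hle
    ((height_le_length_of_isWeaklyRegular hrs hp).trans hlen)
  exact hP (heq ▸ hPp)

instance IsCohenMacaulayRing.polynomial : IsCohenMacaulayRing R[X] where
  exists_isWeaklyRegular P _ := by
    obtain ⟨rs, hrs, hmem, hlen⟩ := exists_isWeaklyRegular_length_eq_height (P.comap C)
    have hmapC : IsWeaklyRegular R[X] (rs.map C) := hrs.of_flat
    have hmem_map : ∀ r ∈ rs.map C, r ∈ P := by simpa using hmem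
    by_cases hP : P ≤ (P.comap C).map C
    · refine ⟨rs.map C, hmapC, hmem_map, ?_⟩
      rw [List.length_map, hlen]
      exact (Ideal.height_mono hP).trans (height_map_C_le _)
    · obtain ⟨f, hfP, hf⟩ := exists_mem_isSMulRegular_of_not_le_map_C hP hrs hlen.le
      refine ⟨rs.map C ++ [f], ?_, ?_, ?_⟩
      · rw [isWeaklyRegular_append_iff, isWeaklyRegular_singleton_iff, smul_eq_mul, Ideal.mul_top,
          ← Ideal.map_ofList]
        exact ⟨hmapC, hf⟩
      · simpa [or_imp, forall_and, hfP] using hmem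
      · simpa [hlen] using height_le_height_comap_C_add_one P

theorem IsCohenMacaulayRing.of_ringEquiv {S : Type*} [CommRing S] (e : R ≃+* S) :
    IsCohenMacaulayRing S where
  __ := isNoetherianRing_of_ringEquiv R e
  exists_isWeaklyRegular P _ := by
    obtain ⟨rs, hrs, hmem, hheight⟩ := IsCohenMacaulayRing.exists_isWeaklyRegular (P.comap e)
    refine ⟨rs.map e, ?_, by simpa using hmem, by simpa using hheight⟩
    exact (AddEquiv.isWeaklyRegular_congr (e := e.toAddEquiv) <| List.forall₂_map_right_iff.mpr <|
      List.forall₂_same.mpr fun r _ x ↦ map_mul e r x).mp hrs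

instance IsCohenMacaulayRing.of_field {K : Type*} [Field K] : IsCohenMacaulayRing K where
  exists_isWeaklyRegular P _ := ⟨[], .nil K K, by simp, by
    simp [Ideal.eq_bot_of_prime P]⟩

instance IsCohenMacaulayRing.mvPolynomial {ι : Type*} [Finite ι] :
    IsCohenMacaulayRing (MvPolynomial ι R) := by
  induction ι using Finite.induction_empty_option with
  | of_equiv e _ =>
    exact IsCohenMacaulayRing.of_ringEquiv (MvPolynomial.renameEquiv R e).toRingEquiv
  | h_empty => exact IsCohenMacaulayRing.of_ringEquiv (MvPolynomial.isEmptyRingEquiv R _).symm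
  | h_option _ =>
    exact IsCohenMacaulayRing.of_ringEquiv (MvPolynomial.optionEquivLeft R _).toRingEquiv.symm

end Polynomial

section Vandermonde

theorem card_lt_of_forall_sum_pow_succ_mul_eq_zero {D : Type*} [CommRing D] [IsDomain D] {m : ℕ}
    {c : Fin m → D} (hc : c ≠ 0) {T : Finset D} (hT : 0 ∉ T)
    (hsum : ∀ t ∈ T, ∑ i : Fin m, t ^ ((i : ℕ) + 1) * c i = 0) : #T < m := by
  by_contra! hcard
  obtain ⟨t⟩ : Nonempty (Fin m ↪ T) := Function.Embedding.nonempty_of_card_le (by simpa)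
  refine hc (Matrix.eq_zero_of_forall_index_sum_pow_mul_eq_zero
    (Subtype.val_injective.comp t.injective) fun j ↦ ?_)
  have hne : (t j : D) ≠ 0 := ne_of_mem_of_not_mem (t j).2 hT
  refine (mul_eq_zero_iff_left hne).mp ?_
  simpa only [mul_sum, pow_succ', mul_assoc, Function.comp_apply] using hsum _ (t j).2

variable {R : Type*} [CommRing R] [Algebra ℚ R] {m : ℕ} {f : Fin m → R}

theorem card_lt_of_forall_sum_pow_succ_mul_mem {Q : Ideal R} [Q.IsPrime] (hf : ∃ i, f i ∉ Q)
    {T : Finset ℕ} (hT : 0 ∉ T) (hmem : ∀ j ∈ T, ∑ i : Fin m, (j : R) ^ ((i : ℕ) + 1) * f i ∈ Q) :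
    #T < m := by
  have : CharZero (R ⧸ Q) := algebraRat.charZero _
  rw [← card_map (Nat.castEmbedding : ℕ ↪ R ⧸ Q)]
  refine card_lt_of_forall_sum_pow_succ_mul_eq_zero (c := Ideal.Quotient.mk Q ∘ f) ?_ ?_ ?_
  · obtain ⟨i, hi⟩ := hf
    exact fun h ↦ hi (Ideal.Quotient.eq_zero_iff_mem.mp (congrFun h i))
  · simpa using hT
  · simpa [← Ideal.Quotient.eq_zero_iff_mem] using hmem

theorem exists_mem_Icc_forall_sum_pow_succ_mul_notMem {S : Set (Ideal R)} (hS : S.Finite)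
    (hprime : ∀ Q ∈ S, Q.IsPrime) (hf : ∀ Q ∈ S, ∃ i, f i ∉ Q) :
    ∃ j ∈ Icc 1 (Nat.card S * (m - 1) + 1),
      ∀ Q ∈ S, ∑ i : Fin m, (j : R) ^ ((i : ℕ) + 1) * f i ∉ Q := by
  classical
  let bad (Q : Ideal R) : Finset ℕ := {j ∈ Icc 1 (Nat.card S * (m - 1) + 1) |
    ∑ i : Fin m, (j : R) ^ ((i : ℕ) + 1) * f i ∈ Q}
  have hbad : ∀ Q ∈ hS.toFinset, #(bad Q) ≤ m - 1 := fun Q hQ ↦ by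
    rw [hS.mem_toFinset] at hQ
    have := hprime Q hQ
    exact Nat.le_sub_one_of_lt <| card_lt_of_forall_sum_pow_succ_mul_mem (hf Q hQ)
      (by simp [bad]) fun j hj ↦ (mem_filter.mp hj).2
  have hcard : #(hS.toFinset.biUnion bad) < #(Icc 1 (Nat.card S * (m - 1) + 1)) := by
    rw [Nat.card_Icc, Nat.card_eq_card_finite_toFinset hS]
    exact (card_biUnion_le_card_mul _ _ _ hbad).trans_lt (by lia)
  obtain ⟨j, hj, hjbad⟩ := exists_mem_notMem_of_card_lt_card hcard
  refine ⟨j, hj, fun Q hQ hmem ↦ hjbad ?_⟩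
  exact mem_biUnion.mpr ⟨Q, hS.mem_toFinset.mpr hQ, mem_filter.mpr ⟨hj, hmem⟩⟩

end Vandermonde

theorem idealHeight_eq_height {R : Type*} [CommRing R] (I : Ideal R) :
    idealHeight I = I.height := by
  simp only [idealHeight, ← PrimeSpectrum.height_eq_orderHeight]
  refine le_antisymm ?_ (le_iInf₂ fun p hp ↦ Ideal.height_mono hp)
  rw [Ideal.height_eq_inf_minimalPrimes]
  exact le_iInf₂ fun P hP ↦ iInf₂_le (⟨P, hP.isPrime⟩ : PrimeSpectrum R) hP.1.2

theorem stmt19_general {R : Type*} [CommRing R] [IsCohenMacaulayRing R] [Algebra ℚ R] {m k : ℕ}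
    (g : Fin k → R) (f : Fin m → R) (hg : k ≤ idealHeight (Ideal.span (Set.range g)))
    (hf : k < idealHeight (Ideal.span (Set.range f))) :
    ∃ j ∈ Icc 1 (Nat.card (associatedPrimes R (R ⧸ Ideal.span (Set.range g))) * (m - 1) + 1),
      (∀ P ∈ associatedPrimes R (R ⧸ Ideal.span (Set.range g)),
        ∑ i : Fin m, (j : R) ^ ((i : ℕ) + 1) * f i ∉ P) ∧
      ∀ r : R, (∑ i : Fin m, (j : R) ^ ((i : ℕ) + 1) * f i) * r ∈ Ideal.span (Set.range g) →
        r ∈ Ideal.span (Set.range g) := by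
  rw [idealHeight_eq_height] at hg hf
  have hf_notMem : ∀ P ∈ associatedPrimes R (R ⧸ Ideal.span (Set.range g)), ∃ i, f i ∉ P := by
    intro P hP
    by_contra! hmem
    have hle : Ideal.span (Set.range f) ≤ P := Ideal.span_le.mpr (Set.range_subset_iff.mpr hmem)
    exact (hf.trans_le (Ideal.height_mono hle)).not_ge
      (height_le_of_mem_associatedPrimes_span hg hP)
  obtain ⟨j, hj, havoid⟩ := exists_mem_Icc_forall_sum_pow_succ_mul_notMem
    (associatedPrimes.finite R _) (fun P hP ↦ hP.1) hf_notMem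
  exact ⟨j, hj, havoid, (isSMulRegular_quotient_iff_mem_of_smul_mem _ _).mp
    (isSMulRegular_iff_forall_notMem_associatedPrimes.mpr havoid)⟩

/-- Let `𝔞 = ⟨f̃₁, …, f̃_k⟩` be an ideal of height `k` in
`R = ℚ̄[X₁, …, X_n]`, and `f₁, …, f_m ∈ R` with `ht⟨f₁, …, f_m⟩ > k`.  Then for
`l = |Ass(𝔞)|·(m − 1) + 1`, some Vandermonde combination `Σᵢ jⁱ fᵢ` with `1 ≤ j ≤ l` avoids
every associated prime of `𝔞`; in particular it is a non-zero-divisor modulo `𝔞`. -/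
theorem stmt19 (n m k : ℕ)
    (g : Fin k → MvPolynomial (Fin n) (AlgebraicClosure ℚ))
    (f : Fin m → MvPolynomial (Fin n) (AlgebraicClosure ℚ))
    (h𝔞 : idealHeight (Ideal.span (Set.range g)) = (k : ℕ∞))
    (hf : (k : ℕ∞) < idealHeight (Ideal.span (Set.range f))) :
    ∃ j ∈ Finset.Icc 1
        (Nat.card (associatedPrimes (MvPolynomial (Fin n) (AlgebraicClosure ℚ))
          (MvPolynomial (Fin n) (AlgebraicClosure ℚ) ⧸ Ideal.span (Set.range g))) * (m - 1) + 1),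
      (∀ P ∈ associatedPrimes (MvPolynomial (Fin n) (AlgebraicClosure ℚ))
          (MvPolynomial (Fin n) (AlgebraicClosure ℚ) ⧸ Ideal.span (Set.range g)),
        (∑ i : Fin m, (j : MvPolynomial (Fin n) (AlgebraicClosure ℚ)) ^ ((i : ℕ) + 1) * f i) ∉ P)
      ∧
      (∀ r : MvPolynomial (Fin n) (AlgebraicClosure ℚ),
        (∑ i : Fin m, (j : MvPolynomial (Fin n) (AlgebraicClosure ℚ)) ^ ((i : ℕ) + 1) * f i) * r
          ∈ Ideal.span (Set.range g) → r ∈ Ideal.span (Set.range g)) :=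
  stmt19_general g f h𝔞.ge hf
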